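/- Let F ⊂ Sym²(ℝⁿ) be a Dirichlet set with Dirichlet dual F̃, and let X ⊂ ℝⁿ be open. If u is of type F on X and v is of type F̃ on X, then u + v is subaffine on X (with the convention −∞ + t = −∞). -/

import Mathlib

open Set Metric Filter MeasureTheory Asymptotics
open scoped Topology BigOperators RealInnerProductSpace

noncomputable section

abbrev Euc (n : ℕ) : Type := EuclideanSpace ℝ (Fin n)

abbrev SymMat (n : ℕ) : Type := ↥(selfAdjoint (Matrix (Fin n) (Fin n) ℝ))

/-- `u` is subaffine on `X`. -/
def SubaffineOn {n : ℕ} (X : Set (Euc n)) (u : Euc n → EReal) : Prop :=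
  ∀ K : Set (Euc n), IsCompact K → K ⊆ X →
    ∀ a : Euc n →ᵃ[ℝ] ℝ,
      (∀ x ∈ frontier K, u x ≤ (a x : EReal)) → ∀ x ∈ K, u x ≤ (a x : EReal)

/-- The Hessian matrix of `u` at `x`. -/
def hessMat {n : ℕ} (u : Euc n → ℝ) (x : Euc n) : Matrix (Fin n) (Fin n) ℝ :=
  fun i j => iteratedFDeriv ℝ 2 u x ![EuclideanSpace.single i 1, EuclideanSpace.single j 1]

structure IsDirichletSet {n : ℕ} (F : Set (SymMat n)) : Prop where
  nonempty : F.Nonempty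
  ne_univ : F ≠ Set.univ
  isClosed : IsClosed F
  add_psd : ∀ A ∈ F, ∀ P : SymMat n, (P : Matrix (Fin n) (Fin n) ℝ).PosSemidef → A + P ∈ F

/-- The Dirichlet dual `F̃ = −(∼ Int F)`. -/
def dirDual {n : ℕ} (F : Set (SymMat n)) : Set (SymMat n) := {A | -A ∉ interior F}

/-- A C² function `v` on `X` is of type `F`. -/
def IsTypeFC2 {n : ℕ} (F : Set (SymMat n)) (X : Set (Euc n)) (v : Euc n → ℝ) : Prop :=
  ContDiffOn ℝ 2 v X ∧ ∀ x ∈ X, ∃ A ∈ F, (A : Matrix (Fin n) (Fin n) ℝ) = hessMat v x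

/-- An u.s.c. function `u` is of type `F` on `X`. -/
def IsTypeF {n : ℕ} (F : Set (SymMat n)) (X : Set (Euc n)) (u : Euc n → EReal) : Prop :=
  ∀ v : Euc n → ℝ, IsTypeFC2 (dirDual F) X v → SubaffineOn X (fun x => u x + (v x : EReal))

/-- The ray set `F⃗` of `F`. -/
def raySet {n : ℕ} (F : Set (SymMat n)) : Set (SymMat n) :=
  closure {A : SymMat n | ∃ t₀ : ℝ, ∀ t : ℝ, t₀ ≤ t → t • A ∈ F}

/-- The bilinear form `⟨A v, w⟩` of a matrix. -/
def bilin {n : ℕ} (A : Matrix (Fin n) (Fin n) ℝ) (v w : Euc n) : ℝ :=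
  ∑ i, ∑ j, A i j * v i * w j

/-- `A` is not negative definite. -/
def NotNegDef {n : ℕ} (A : SymMat n) : Prop :=
  ¬ (-(A : Matrix (Fin n) (Fin n) ℝ)).PosDef

def IsLocalDefiningFn {n : ℕ} (Ω U : Set (Euc n)) (ρ : Euc n → ℝ) : Prop :=
  IsOpen U ∧ ContDiffOn ℝ (⊤ : ℕ∞) ρ U ∧ Ω ∩ U = {y ∈ U | ρ y < 0} ∧ ∀ y ∈ U, fderiv ℝ ρ y ≠ 0

def HasSmoothBoundary {n : ℕ} (Ω : Set (Euc n)) : Prop :=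
  ∀ x ∈ frontier Ω, ∃ U ρ, x ∈ U ∧ IsLocalDefiningFn Ω U ρ

/-- `∂Ω` is strictly `G`-convex at `x`. -/
def StrictlyConvexAt {n : ℕ} (G : Set (SymMat n)) (Ω : Set (Euc n)) (x : Euc n) : Prop :=
  ∃ U ρ, x ∈ U ∧ IsLocalDefiningFn Ω U ρ ∧
    ∃ B ∈ interior G, ∀ v w : Euc n, fderiv ℝ ρ x v = 0 → fderiv ℝ ρ x w = 0 →
      bilin (hessMat ρ x) v w = bilin (B : Matrix (Fin n) (Fin n) ℝ) v w

def symOne (n : ℕ) : SymMat n := ⟨1, selfAdjoint.mem_iff.mpr (IsSelfAdjoint.one _)⟩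

/-- `u` is twice differentiable at `x` with Hessian `A`. -/
def TwiceDiffWithHessAt {n : ℕ} (u : Euc n → ℝ) (x : Euc n)
    (A : Matrix (Fin n) (Fin n) ℝ) : Prop :=
  ∃ p : Euc n, (fun h : Euc n => u (x + h) - u x - ⟪p, h⟫ - 1/2 * bilin A h h)
      =o[𝓝 (0 : Euc n)] fun h => ‖h‖ ^ 2

/-!
If `u + v` exceeded an affine function inside a compact set but not on its boundary, then, after
truncation from below and a small strictly convex perturbation, the sum of the sup-convolutions of
the two functions would have an interior maximum. These sup-convolutions are semiconvex, so on the
upper contact set of their sum the gradients exist and are Lipschitz; since the image of the contact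
set under the gradient contains a ball, the contact set has positive measure. Hence, by Rademacher's
theorem at a density point, both sup-convolutions have a second-order Taylor expansion at some
contact point. The two Hessians are also upper Hessians of `u` and `v`, so they lie in `F` and `F̃`,
while concavity at the contact point makes their sum negative definite. This contradicts duality.
-/

section Geometry

variable {E : Type*} [NormedAddCommGroup E] [InnerProductSpace ℝ E]

/-- `T` is an upper Hessian of `f` at `x`: for some slope `l`, the pair `(l, T)` is a second-order
superjet of `f` at `x`. Only the quadratic form of `T` matters, so `T` is not assumed symmetric. -/
def IsUpperHessianAt (f : E → ℝ) (x : E) (T : E →L[ℝ] E) : Prop :=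
  ∃ l : E →L[ℝ] ℝ, ∀ η > 0, ∀ᶠ h in 𝓝 (0 : E),
    f (x + h) ≤ f x + l h + 1 / 2 * ⟪T h, h⟫ + η * ‖h‖ ^ 2

/-- `f` has the second-order Taylor expansion at `x` with gradient `p` and Hessian form
`h ↦ ⟪T h, h⟫`. -/
def HasTaylorExpansionAt (f : E → ℝ) (p : E) (T : E →L[ℝ] E) (x : E) : Prop :=
  (fun h => f (x + h) - f x - ⟪p, h⟫ - 1 / 2 * ⟪T h, h⟫) =o[𝓝 0] fun h => ‖h‖ ^ 2

/-- `G x` is a subgradient of the semiconvex function `f` at every `x`: equivalently, the vectors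
`G x + 2 k x` are subgradients of the convex function `f + k ‖·‖²`. -/
def IsSemiconvexGradient (k : ℝ) (f : E → ℝ) (G : E → E) : Prop :=
  ∀ x y, f x + ⟪G x, y - x⟫ - k * ‖y - x‖ ^ 2 ≤ f y

/-- The upper contact set of `f`: the points at which the affine function of slope `G x` through
`(x, f x)` lies above `f`. -/
def upperContactSet (f : E → ℝ) (G : E → E) : Set E :=
  {x | ∀ y, f y ≤ f x + ⟪G x, y - x⟫}

/-- `U` is the sup-convolution `x ↦ sup_{y ∈ K} (f y - k ‖x - y‖²)` of `f` over `K`, the supremum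
being attained at `Y x`. -/
structure IsSupConvolution (K : Set E) (f : E → ℝ) (k : ℝ) (U : E → ℝ) (Y : E → E) : Prop where
  mem : ∀ x, Y x ∈ K
  eq : ∀ x, U x = f (Y x) - k * ‖x - Y x‖ ^ 2
  le : ∀ x, ∀ y ∈ K, f y - k * ‖x - y‖ ^ 2 ≤ U x

theorem IsUpperHessianAt.congr {f : E → ℝ} {x : E} {S T : E →L[ℝ] E} (hT : IsUpperHessianAt f x T)
    (h : ∀ v, ⟪S v, v⟫ = ⟪T v, v⟫) : IsUpperHessianAt f x S := by
  simpa only [IsUpperHessianAt, h] using hT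

theorem HasTaylorExpansionAt.isUpperHessianAt {f : E → ℝ} {p x : E} {T : E →L[ℝ] E}
    (h : HasTaylorExpansionAt f p T x) : IsUpperHessianAt f x T := by
  refine ⟨innerSL ℝ p, fun η hη => ?_⟩
  filter_upwards [h.def hη] with v hv
  rw [norm_pow, norm_norm] at hv
  rw [innerSL_apply_apply]
  linarith [Real.le_norm_self (f (x + v) - f x - ⟪p, v⟫ - 1 / 2 * ⟪T v, v⟫)]

theorem HasTaylorExpansionAt.add {f g : E → ℝ} {p q x : E} {T R : E →L[ℝ] E}
    (hf : HasTaylorExpansionAt f p T x) (hg : HasTaylorExpansionAt g q R x) :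
    HasTaylorExpansionAt (fun y => f y + g y) (p + q) (T + R) x := by
  refine (IsLittleO.add hf hg).congr_left fun h => ?_
  rw [add_apply, inner_add_left, inner_add_left]
  ring

theorem HasTaylorExpansionAt.inner_nonpos_of_le_affine {f : E → ℝ} {p x : E} {T : E →L[ℝ] E}
    (hf : HasTaylorExpansionAt f p T x) (hle : ∀ y, f y ≤ f x + ⟪p, y - x⟫) (h : E) :
    ⟪T h, h⟫ ≤ 0 := by
  by_contra! hpos
  have hh : 0 < ‖h‖ := norm_pos_iff.2 (by rintro rfl; simp at hpos)
  have hη : 0 < ⟪T h, h⟫ / (4 * ‖h‖ ^ 2) := by positivity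
  have htend : Tendsto (fun t : ℝ => t • h) (𝓝[>] 0) (𝓝 0) :=
    tendsto_nhdsWithin_of_tendsto_nhds
      (Continuous.tendsto' (by fun_prop) _ _ (zero_smul ℝ h))
  obtain ⟨t, ht, ht0⟩ := ((htend.eventually (hf.def hη)).and self_mem_nhdsWithin).exists
  have ht0 : 0 < t := ht0
  have herr : ⟪T h, h⟫ / (4 * ‖h‖ ^ 2) * ‖‖t • h‖ ^ 2‖ = t ^ 2 * ⟪T h, h⟫ / 4 := by
    rw [norm_pow, norm_norm, norm_smul, Real.norm_of_nonneg ht0.le]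
    field_simp
  have hquad : ⟪T (t • h), t • h⟫ = t ^ 2 * ⟪T h, h⟫ := by
    rw [map_smul, real_inner_smul_left, real_inner_smul_right]
    ring
  have hcontact := hle (x + t • h)
  rw [add_sub_cancel_left] at hcontact
  rw [herr, hquad] at ht
  have := mul_pos (pow_pos ht0 2) hpos
  linarith [neg_le_of_abs_le ht]

theorem IsUpperHessianAt.of_add_normSq_sub_affine {f : E → ℝ} {x : E} {T : E →L[ℝ] E} {δ : ℝ}
    {l : E →L[ℝ] ℝ} {c : ℝ}
    (h : IsUpperHessianAt (fun y => f y + (δ * ‖y‖ ^ 2 - (l y + c))) x T) :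
    IsUpperHessianAt f x (T - (2 * δ) • ContinuousLinearMap.id ℝ E) := by
  obtain ⟨m, hm⟩ := h
  refine ⟨m + l - (2 * δ) • innerSL ℝ x, fun η hη => ?_⟩
  filter_upwards [hm η hη] with v hv
  rw [norm_add_sq_real, map_add] at hv
  simp only [add_apply, sub_apply, smul_apply, ContinuousLinearMap.id_apply,
    innerSL_apply_apply, inner_sub_left, real_inner_smul_left, real_inner_self_eq_norm_sq,
    smul_eq_mul]
  linarith

theorem dist_le_of_forall_dist_le_mul_add_sq {α : Type*} [PseudoMetricSpace α] {φ : ℝ → α}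
    {M C : ℝ}
    (h : ∀ s t, 0 ≤ s → s ≤ t → t ≤ 1 → dist (φ s) (φ t) ≤ M * (t - s) + C * (t - s) ^ 2) :
    dist (φ 0) (φ 1) ≤ M := by
  have hpart : ∀ N : ℕ, dist (φ 0) (φ 1) ≤ M + C * (1 / ((N : ℝ) + 1)) := by
    intro N
    have hN : (0 : ℝ) < N + 1 := by positivity
    have hstep : ∀ {i : ℕ}, i < N + 1 →
        dist (φ (i / (N + 1))) (φ ((i + 1 : ℕ) / (N + 1))) ≤
          M * (1 / (N + 1)) + C * (1 / (N + 1)) ^ 2 := by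
      intro i hi
      have hlen : ((i + 1 : ℕ) : ℝ) / (N + 1) - i / (N + 1) = 1 / (N + 1) := by
        push_cast
        ring
      rw [← hlen]
      refine h _ _ (by positivity) (by gcongr; exact i.le_succ) ?_
      rw [div_le_one hN]
      exact_mod_cast hi
    have hsum := dist_le_range_sum_of_dist_le (f := fun i : ℕ => φ (i / (N + 1))) (N + 1) hstep
    simp only [Finset.sum_const, Finset.card_range, nsmul_eq_mul, Nat.cast_add, Nat.cast_one,
      Nat.cast_zero, zero_div, div_self hN.ne'] at hsum
    refine hsum.trans_eq ?_
    field_simp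
  have hlim : Tendsto (fun N : ℕ => M + C * (1 / ((N : ℝ) + 1))) atTop (𝓝 M) := by
    simpa using (tendsto_one_div_add_atTop_nhds_zero_nat.const_mul C).const_add M
  exact ge_of_tendsto' hlim hpart

theorem eventually_abs_inner_sub_le {P : E → E} {x : E} {T : E →L[ℝ] E}
    (hT : HasFDerivAt P T x) {η : ℝ} (hη : 0 < η) : ∀ᶠ h in 𝓝 0, ∀ t, 0 ≤ t → t ≤ 1 →
      |⟪P (x + t • h), h⟫ - ⟪P x, h⟫ - t * ⟪T h, h⟫| ≤ η * ‖h‖ ^ 2 := by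
  obtain ⟨δ, hδ, hball⟩ := Metric.eventually_nhds_iff_ball.1 (hT.isLittleO.def hη)
  filter_upwards [Metric.ball_mem_nhds (0 : E) hδ] with h hh t ht0 ht1
  have hh : ‖h‖ < δ := mem_ball_zero_iff.1 hh
  have hth : ‖t • h‖ ≤ ‖h‖ := by
    rw [norm_smul, Real.norm_of_nonneg ht0]
    exact mul_le_of_le_one_left (norm_nonneg h) ht1
  have herr := hball (x + t • h) (by rw [mem_ball_iff_norm, add_sub_cancel_left]; linarith)
  rw [add_sub_cancel_left] at herr
  have hinner : ⟪P (x + t • h) - P x - T (t • h), h⟫ =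
      ⟪P (x + t • h), h⟫ - ⟪P x, h⟫ - t * ⟪T h, h⟫ := by
    rw [inner_sub_left, inner_sub_left, map_smul, real_inner_smul_left]
  rw [← hinner]
  calc |⟪P (x + t • h) - P x - T (t • h), h⟫|
      ≤ ‖P (x + t • h) - P x - T (t • h)‖ * ‖h‖ := abs_real_inner_le_norm _ _
    _ ≤ η * ‖h‖ * ‖h‖ := by gcongr; exact herr.trans (by gcongr)
    _ = η * ‖h‖ ^ 2 := by ring

namespace IsSemiconvexGradient

variable {k : ℝ} {f g : E → ℝ} {P Q : E → E}

theorem add (hf : IsSemiconvexGradient k f P) (hg : IsSemiconvexGradient k g Q) :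
    IsSemiconvexGradient (2 * k) (fun x => f x + g x) (fun x => P x + Q x) := by
  intro x y
  rw [inner_add_left]
  linarith [hf x y, hg x y]

theorem eq_of_forall_le_affine (hf : IsSemiconvexGradient k f P) {x p : E}
    (hle : ∀ y, f y ≤ f x + ⟪p, y - x⟫) : P x = p := by
  set d := P x - p
  have hray : ∀ t > 0, ‖d‖ ^ 2 ≤ t * (k * ‖d‖ ^ 2) := by
    intro t ht
    have hlow := hf x (x + t • d)
    have hupp := hle (x + t • d)
    rw [add_sub_cancel_left, real_inner_smul_right] at hlow hupp
    rw [norm_smul, Real.norm_of_nonneg ht.le] at hlow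
    have hself : ⟪P x, d⟫ - ⟪p, d⟫ = ‖d‖ ^ 2 := by
      rw [← inner_sub_left, real_inner_self_eq_norm_sq]
    refine le_of_mul_le_mul_left ?_ ht
    linear_combination hlow + hupp - t * hself
  have hlim : Tendsto (fun t : ℝ => t * (k * ‖d‖ ^ 2)) (𝓝[>] 0) (𝓝 0) :=
    tendsto_nhdsWithin_of_tendsto_nhds (Continuous.tendsto' (by fun_prop) _ _ (zero_mul _))
  have hsq : ‖d‖ ^ 2 ≤ 0 := ge_of_tendsto hlim (eventually_mem_nhdsWithin.mono hray)
  exact sub_eq_zero.1 (norm_eq_zero.1 (sq_nonpos_iff _ |>.1 hsq))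

theorem le_add_sq_of_mem_upperContactSet (hg : IsSemiconvexGradient k g Q) {s : E}
    (hs : s ∈ upperContactSet (fun x => f x + g x) fun x => P x + Q x) (y : E) :
    f y ≤ f s + ⟪P s, y - s⟫ + k * ‖y - s‖ ^ 2 := by
  have hcontact := hs y
  rw [inner_add_left] at hcontact
  linarith [hg s y]

theorem norm_sub_le (hf : IsSemiconvexGradient k f P) (hk : 0 ≤ k) {s : E}
    (hs : ∀ y, f y ≤ f s + ⟪P s, y - s⟫ + k * ‖y - s‖ ^ 2) (y : E) :
    ‖P y - P s‖ ≤ 6 * k * ‖y - s‖ := by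
  obtain hD | hD := (norm_nonneg (P y - P s)).eq_or_lt
  · rw [← hD]
    positivity
  obtain rfl | hys := eq_or_ne y s
  · simp
  have hd : 0 < ‖y - s‖ := norm_sub_pos_iff.2 hys
  set w : E := (‖y - s‖ / ‖P y - P s‖) • (P y - P s)
  have hw : ‖w‖ = ‖y - s‖ := by
    rw [norm_smul, Real.norm_of_nonneg (by positivity), div_mul_cancel₀ _ hD.ne']
  have hinner : ⟪P y, w⟫ - ⟪P s, w⟫ = ‖y - s‖ * ‖P y - P s‖ := by
    rw [← inner_sub_left, real_inner_smul_right, real_inner_self_eq_norm_sq]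
    field_simp
  have hfar : k * ‖y - s + w‖ ^ 2 ≤ k * (2 * ‖y - s‖) ^ 2 := by
    gcongr
    linarith [norm_add_le (y - s) w]
  have hlow := hf y (y + w)
  have hupp := hs (y + w)
  rw [add_sub_cancel_left, hw] at hlow
  rw [add_sub_right_comm, inner_add_right] at hupp
  refine le_of_mul_le_mul_left ?_ hd
  linarith [hf s y]

theorem hasTaylorExpansionAt (hf : IsSemiconvexGradient k f P) {x : E} {T : E →L[ℝ] E}
    (hT : HasFDerivAt P T x) : HasTaylorExpansionAt f (P x) T x := by
  refine IsLittleO.of_bound fun η hη => ?_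
  filter_upwards [eventually_abs_inner_sub_le hT hη] with h hgrad
  -- `f` need not be differentiable off `x`, so instead of the mean value theorem the increments of
  -- the remainder `φ` along the segment are summed over a partition.
  set φ : ℝ → ℝ := fun t => f (x + t • h) - t * ⟪P x, h⟫ - t ^ 2 / 2 * ⟪T h, h⟫ with hφ
  have hincr : ∀ s t, 0 ≤ s → s ≤ t → t ≤ 1 → dist (φ s) (φ t) ≤
      η * ‖h‖ ^ 2 * (t - s) + (k * ‖h‖ ^ 2 + 1 / 2 * |⟪T h, h⟫|) * (t - s) ^ 2 := by
    intro s t hs hst ht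
    have hlow := hf (x + s • h) (x + t • h)
    have hupp := hf (x + t • h) (x + s • h)
    rw [add_sub_add_left_eq_sub, ← sub_smul, real_inner_smul_right, norm_smul, Real.norm_eq_abs,
      mul_pow, sq_abs] at hlow hupp
    have hs' := mul_le_mul_of_nonneg_left (abs_le.1 (hgrad s hs (hst.trans ht))).1
      (sub_nonneg.2 hst)
    have ht' := mul_le_mul_of_nonneg_left (abs_le.1 (hgrad t (hs.trans hst) ht)).2
      (sub_nonneg.2 hst)
    have hTle := mul_le_mul_of_nonneg_left (le_abs_self ⟪T h, h⟫) (sq_nonneg (t - s))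
    rw [dist_comm, Real.dist_eq, abs_le, hφ]
    constructor <;> linarith
  have hend := dist_le_of_forall_dist_le_mul_add_sq hincr
  rw [dist_comm, Real.dist_eq, hφ] at hend
  rw [Real.norm_eq_abs, norm_pow, norm_norm]
  convert hend using 2
  simp only [one_smul, zero_smul, add_zero]
  ring

end IsSemiconvexGradient

end Geometry

section Differentiability

theorem lipschitzOnWith_of_forall_norm_sub_le {E F : Type*} [SeminormedAddCommGroup E]
    [SeminormedAddCommGroup F] {G : E → F} {S : Set E} {C : NNReal}
    (hG : ∀ s ∈ S, ∀ y, ‖G y - G s‖ ≤ C * ‖y - s‖) : LipschitzOnWith C G S :=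
  LipschitzOnWith.of_dist_le_mul fun y _ s hs => by
    rw [dist_eq_norm, dist_eq_norm]
    exact hG s hs y

variable {E F : Type*} [NormedAddCommGroup E] [NormedSpace ℝ E] [NormedAddCommGroup F]
  [NormedSpace ℝ F]

theorem hasFDerivAt_of_hasFDerivWithinAt_of_forall_norm_sub_le {G : E → F} {T : E →L[ℝ] F}
    {S : Set E} {x : E} {C : NNReal} (hT : HasFDerivWithinAt G T S x)
    (hG : ∀ s ∈ S, ∀ y, ‖G y - G s‖ ≤ C * ‖y - s‖)
    (hS : ∀ η > 0, ∀ᶠ y in 𝓝 x, ∃ s ∈ S, ‖s - y‖ ≤ η * ‖y - x‖) : HasFDerivAt G T x := by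
  refine HasFDerivAt.of_isLittleO <| IsLittleO.of_bound fun c hc => ?_
  set η := min 1 (c / (2 * (C + ‖T‖ + 1)))
  have hη : 0 < η := by positivity
  have hηc : (C + ‖T‖) * η ≤ c / 2 := calc
    (C + ‖T‖) * η ≤ (C + ‖T‖ + 1) * (c / (2 * (C + ‖T‖ + 1))) :=
      mul_le_mul (le_add_of_nonneg_right zero_le_one) (min_le_right _ _) hη.le (by positivity)
    _ = c / 2 := by field_simp
  obtain ⟨δ, hδ, hball⟩ := Metric.mem_nhdsWithin_iff.1
    (hT.isLittleO.def (by positivity : 0 < c / 4))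
  filter_upwards [hS η hη, Metric.ball_mem_nhds x (half_pos hδ)] with y ⟨s, hs, hsy⟩ hy
  have hsx : ‖s - x‖ ≤ 2 * ‖y - x‖ := by
    have : η * ‖y - x‖ ≤ 1 * ‖y - x‖ := by gcongr; exact min_le_left _ _
    linarith [norm_sub_le_norm_sub_add_norm_sub s y x]
  rw [mem_ball_iff_norm] at hy
  have hTs : ‖G s - G x - T (s - x)‖ ≤ c / 4 * ‖s - x‖ :=
    hball ⟨mem_ball_iff_norm.2 (by linarith), hs⟩
  calc ‖G y - G x - T (y - x)‖
      = ‖(G y - G s) + (G s - G x - T (s - x)) + T (s - y)‖ := by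
        simp only [map_sub]
        congr 1
        abel
    _ ≤ ‖G y - G s‖ + ‖G s - G x - T (s - x)‖ + ‖T (s - y)‖ := norm_add₃_le
    _ ≤ C * ‖s - y‖ + c / 4 * (2 * ‖y - x‖) + ‖T‖ * ‖s - y‖ := by
        gcongr
        · exact norm_sub_rev s y ▸ hG s hs y
        · exact hTs.trans (by gcongr)
        · exact T.le_opNorm _
    _ ≤ C * (η * ‖y - x‖) + c / 4 * (2 * ‖y - x‖) + ‖T‖ * (η * ‖y - x‖) := by gcongr
    _ = (C + ‖T‖) * η * ‖y - x‖ + c / 2 * ‖y - x‖ := by ring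
    _ ≤ c / 2 * ‖y - x‖ + c / 2 * ‖y - x‖ := by gcongr
    _ = c * ‖y - x‖ := by ring

variable [MeasurableSpace E] [BorelSpace E] [FiniteDimensional ℝ E]

open scoped Pointwise in
theorem eventually_exists_mem_norm_sub_le_of_density_one (μ : Measure E) [μ.IsAddHaarMeasure]
    {S : Set E} {x : E} (hx : x ∈ S)
    (h : Tendsto (fun r => μ (S ∩ closedBall x r) / μ (closedBall x r)) (𝓝[>] 0) (𝓝 1))
    {η : ℝ} (hη : 0 < η) : ∀ᶠ y in 𝓝 x, ∃ s ∈ S, ‖s - y‖ ≤ η * ‖y - x‖ := by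
  obtain ⟨t, -, tfin, ht⟩ :=
    finite_cover_balls_of_compact (isCompact_sphere (0 : E) 1) (half_pos hη)
  have hscale : ∀ᶠ r in 𝓝[>] (0 : ℝ), ∀ c ∈ t, (S ∩ ({x} + r • ball c (η / 2))).Nonempty := by
    rw [eventually_all_finite tfin]
    intro c _
    exact Measure.eventually_nonempty_inter_smul_of_density_one μ S x h _ measurableSet_ball
      (measure_ball_pos μ c (half_pos hη)).ne'
  obtain ⟨δ, hδ, hδ'⟩ := mem_nhdsGT_iff_exists_Ioo_subset.1 hscale
  filter_upwards [Metric.ball_mem_nhds x hδ] with y hy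
  obtain rfl | hyx := eq_or_ne y x
  · exact ⟨y, hx, by simp⟩
  have hpos : 0 < ‖y - x‖ := norm_sub_pos_iff.2 hyx
  have hsphere : ‖y - x‖⁻¹ • (y - x) ∈ sphere (0 : E) 1 := by
    rw [mem_sphere_zero_iff_norm, norm_smul, norm_inv, norm_norm, inv_mul_cancel₀ hpos.ne']
  obtain ⟨c, hct, hc⟩ := mem_iUnion₂.1 (ht hsphere)
  obtain ⟨s, hsS, hs⟩ := hδ' (show ‖y - x‖ ∈ Ioo 0 δ from ⟨hpos, mem_ball_iff_norm.1 hy⟩) c hct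
  rw [singleton_add] at hs
  obtain ⟨-, ⟨b, hb, rfl⟩, rfl⟩ := hs
  refine ⟨_, hsS, ?_⟩
  have hscaled : x + ‖y - x‖ • b - y = ‖y - x‖ • (b - ‖y - x‖⁻¹ • (y - x)) := by
    rw [smul_sub, smul_inv_smul₀ hpos.ne']
    abel
  change ‖x + ‖y - x‖ • b - y‖ ≤ _
  rw [hscaled, norm_smul, norm_norm, mul_comm, ← dist_eq_norm]
  gcongr
  linarith [dist_triangle_right b (‖y - x‖⁻¹ • (y - x)) c, mem_ball.1 hb, mem_ball.1 hc]

theorem ae_mem_imp_differentiableAt_of_forall_norm_sub_le [FiniteDimensional ℝ F]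
    (μ : Measure E) [μ.IsAddHaarMeasure] {G : E → F} {S : Set E} {C : NNReal}
    (hG : ∀ s ∈ S, ∀ y, ‖G y - G s‖ ≤ C * ‖y - s‖) :
    ∀ᵐ x ∂μ, x ∈ S → DifferentiableAt ℝ G x := by
  have hlip := lipschitzOnWith_of_forall_norm_sub_le hG
  filter_upwards [hlip.ae_differentiableWithinAt_of_mem (μ := μ),
    ae_imp_of_ae_restrict (Besicovitch.ae_tendsto_measure_inter_div μ S)] with x hdiff hdens hx
  have hdense := fun η => eventually_exists_mem_norm_sub_le_of_density_one μ hx (hdens hx) (η := η)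
  exact (hasFDerivAt_of_hasFDerivWithinAt_of_forall_norm_sub_le (hdiff hx).hasFDerivWithinAt hG
    hdense).differentiableAt

theorem measure_ne_zero_of_ball_subset_image_of_lipschitzOnWith (μ : Measure E)
    [μ.IsAddHaarMeasure] {G : E → E} {S : Set E} {C : NNReal} (hG : LipschitzOnWith C G S)
    {c : E} {r : ℝ} (hr : 0 < r) (hball : ball c r ⊆ G '' S) : μ S ≠ 0 := by
  let ν : Measure E := Measure.hausdorffMeasure (Module.finrank ℝ E : ℝ)
  have : ν.IsAddHaarMeasure := isAddHaarMeasure_hausdorffMeasure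
  intro hS
  have hνS : ν S = 0 := Measure.absolutelyContinuous_isAddHaarMeasure ν μ hS
  have hle : ν (ball c r) ≤ C ^ (Module.finrank ℝ E : ℝ) * ν S :=
    (measure_mono hball).trans (hG.hausdorffMeasure_image_le (Nat.cast_nonneg _))
  rw [hνS, mul_zero] at hle
  exact (measure_ball_pos ν c hr).not_ge hle

end Differentiability

section Jensen

variable {E : Type*} [NormedAddCommGroup E] [InnerProductSpace ℝ E] [FiniteDimensional ℝ E]
  {k : ℝ} {f g : E → ℝ} {P Q : E → E}

namespace IsSemiconvexGradient

theorem exists_mem_upperContactSet_differentiableAt (hf : IsSemiconvexGradient k f P)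
    (hg : IsSemiconvexGradient k g Q) (hk : 0 ≤ k)
    (hmax : ∀ p, ∃ x, ∀ y, f y + g y ≤ f x + g x + ⟪p, y - x⟫) {r : ℝ} (hr : 0 < r) :
    ∃ x ∈ upperContactSet (fun x => f x + g x) (fun x => P x + Q x), ‖P x + Q x‖ < r ∧
      DifferentiableAt ℝ P x ∧ DifferentiableAt ℝ Q x := by
  borelize E
  let μ : Measure E := Measure.addHaar
  set S := upperContactSet (fun x => f x + g x) (fun x => P x + Q x) ∩ {x | ‖P x + Q x‖ < r}
  have hP : ∀ s ∈ S, ∀ y, ‖P y - P s‖ ≤ (6 * k).toNNReal * ‖y - s‖ := fun s hs y => by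
    rw [Real.coe_toNNReal _ (by positivity)]
    exact hf.norm_sub_le hk (hg.le_add_sq_of_mem_upperContactSet hs.1) y
  have hQ : ∀ s ∈ S, ∀ y, ‖Q y - Q s‖ ≤ (6 * k).toNNReal * ‖y - s‖ := fun s hs y => by
    rw [Real.coe_toNNReal _ (by positivity)]
    refine hg.norm_sub_le hk (hf.le_add_sq_of_mem_upperContactSet ?_) y
    simpa only [add_comm] using hs.1
  have hball : ball 0 r ⊆ (fun x => P x + Q x) '' S := fun p hp => by
    obtain ⟨x, hx⟩ := hmax p
    have hxp : P x + Q x = p := (hf.add hg).eq_of_forall_le_affine hx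
    subst hxp
    exact ⟨x, ⟨hx, mem_ball_zero_iff.1 hp⟩, rfl⟩
  have hpos : μ S ≠ 0 := measure_ne_zero_of_ball_subset_image_of_lipschitzOnWith μ
    ((lipschitzOnWith_of_forall_norm_sub_le hP).add (lipschitzOnWith_of_forall_norm_sub_le hQ))
    hr hball
  obtain ⟨x, hxS, hxP, hxQ⟩ : ∃ x ∈ S, DifferentiableAt ℝ P x ∧ DifferentiableAt ℝ Q x := by
    by_contra! hnone
    refine hpos (measure_eq_zero_iff_ae_notMem.2 ?_)
    filter_upwards [ae_mem_imp_differentiableAt_of_forall_norm_sub_le μ hP,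
      ae_mem_imp_differentiableAt_of_forall_norm_sub_le μ hQ] with x hxP hxQ hxS
    exact hnone x hxS (hxP hxS) (hxQ hxS)
  exact ⟨x, hxS.1, hxS.2, hxP, hxQ⟩

end IsSemiconvexGradient

end Jensen

section SupConvolution

theorem exists_forall_sub_mul_dist_sq_lt {α : Type*} [MetricSpace α] {S : Set (α × α)}
    (hS : IsCompact S) {φ : α × α → ℝ} (hφ : UpperSemicontinuousOn φ S) {c : ℝ}
    (hdiag : ∀ x, (x, x) ∈ S → φ (x, x) < c) :
    ∃ k > 0, ∀ q ∈ S, φ q - k * dist q.1 q.2 ^ 2 < c := by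
  obtain ⟨M, hM⟩ := hφ.bddAbove_of_isCompact hS
  have hB : IsCompact (S ∩ φ ⁻¹' Ici c) := hφ.isCompact_inter_preimage_Ici hS c
  have hpos : ∀ q ∈ S ∩ φ ⁻¹' Ici c, 0 < dist q.1 q.2 := by
    rintro ⟨y, z⟩ ⟨hyz, hc⟩
    refine dist_pos.2 fun h : y = z => ?_
    subst h
    exact (hdiag y hyz).not_ge hc
  obtain ⟨d, hd, hdist⟩ := hB.exists_forall_le' continuous_dist.continuousOn hpos
  refine ⟨(|M - c| + 1) / d ^ 2, by positivity, fun q hq => ?_⟩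
  by_cases hqc : φ q < c
  · have : 0 ≤ (|M - c| + 1) / d ^ 2 * dist q.1 q.2 ^ 2 := by positivity
    linarith
  have hfar : d ≤ dist q.1 q.2 := hdist q ⟨hq, not_lt.1 hqc⟩
  have hpen : |M - c| + 1 ≤ (|M - c| + 1) / d ^ 2 * dist q.1 q.2 ^ 2 := calc
    |M - c| + 1 = (|M - c| + 1) / d ^ 2 * d ^ 2 := by field_simp
    _ ≤ _ := by gcongr
  linarith [hM (mem_image_of_mem φ hq), le_abs_self (M - c)]

theorem exists_forall_mem_interior_of_le_sub_mul_dist_sq {α : Type*} [MetricSpace α] {K : Set α}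
    {f g : α → ℝ} (hK : IsCompact K) (hf : UpperSemicontinuousOn f K)
    (hg : UpperSemicontinuousOn g K) {c : ℝ} (hfr : ∀ x ∈ frontier K, f x + g x < c) :
    ∃ k > 0, ∀ y ∈ K, ∀ z ∈ K, c ≤ f y + g z - k * dist y z ^ 2 →
      y ∈ interior K ∧ z ∈ interior K := by
  have hfrK : frontier K ⊆ K := hK.isClosed.frontier_subset
  have hfrc : IsCompact (frontier K) := hK.of_isClosed_subset isClosed_frontier hfrK
  have hfg : UpperSemicontinuousOn (fun w : α × α => f w.1 + g w.2)
      (frontier K ×ˢ K ∪ K ×ˢ frontier K) :=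
    ((hf.comp continuousOn_fst fun w hw => hw.1).add
      (hg.comp continuousOn_snd fun w hw => hw.2)).mono
      (union_subset (prod_mono hfrK le_rfl) (prod_mono le_rfl hfrK))
  obtain ⟨k, hk, hlt⟩ := exists_forall_sub_mul_dist_sq_lt
    ((hfrc.prod hK).union (hK.prod hfrc)) hfg fun w hw => hfr w (hw.elim And.left And.right)
  refine ⟨k, hk, fun y hy z hz hval => ?_⟩
  have hyfr : y ∉ frontier K := fun h => (hlt (y, z) (Or.inl ⟨h, hz⟩)).not_ge hval
  have hzfr : z ∉ frontier K := fun h => (hlt (y, z) (Or.inr ⟨hy, h⟩)).not_ge hval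
  rw [hK.isClosed.frontier_eq] at hyfr hzfr
  exact ⟨by_contra fun h => hyfr ⟨hy, h⟩, by_contra fun h => hzfr ⟨hz, h⟩⟩

theorem exists_isSupConvolution {E : Type*} [NormedAddCommGroup E] {K : Set E} {f : E → ℝ}
    (hK : IsCompact K) (hne : K.Nonempty) (hf : UpperSemicontinuousOn f K) (k : ℝ) :
    ∃ U Y, IsSupConvolution K f k U Y := by
  have hmax : ∀ x, ∃ y ∈ K, ∀ z ∈ K, f z - k * ‖x - z‖ ^ 2 ≤ f y - k * ‖x - y‖ ^ 2 := by
    intro x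
    have hpen : ContinuousOn (fun y => -(k * ‖x - y‖ ^ 2)) K := by fun_prop
    simpa only [← sub_eq_add_neg, isMaxOn_iff] using
      (hf.add hpen.upperSemicontinuousOn).exists_isMaxOn hne hK
  choose Y hYK hY using hmax
  exact ⟨fun x => f (Y x) - k * ‖x - Y x‖ ^ 2, Y, hYK, fun _ => rfl, hY⟩

variable {E : Type*} [NormedAddCommGroup E] [InnerProductSpace ℝ E]
  {K : Set E} {f g : E → ℝ} {k : ℝ} {U V : E → ℝ} {Y Z : E → E}

namespace IsSupConvolution

theorem isSemiconvexGradient (hU : IsSupConvolution K f k U Y) :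
    IsSemiconvexGradient k U fun x => (2 * k) • (Y x - x) := by
  intro x y
  have hle := hU.le y (Y x) (hU.mem x)
  have hsub : y - Y x = (y - x) - (Y x - x) := by abel
  rw [hsub, norm_sub_sq_real, real_inner_comm] at hle
  rw [hU.eq, real_inner_smul_left, norm_sub_rev x]
  linarith

theorem isUpperHessianAt (hU : IsSupConvolution K f k U Y) {x : E} {T : E →L[ℝ] E}
    (hx : Y x ∈ interior K) (hT : IsUpperHessianAt U x T) : IsUpperHessianAt f (Y x) T := by
  obtain ⟨l, hl⟩ := hT
  refine ⟨l, fun η hη => ?_⟩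
  have hshift : Tendsto (fun h => Y x + h) (𝓝 0) (𝓝 (Y x)) :=
    Continuous.tendsto' (by fun_prop) _ _ (add_zero _)
  filter_upwards [hl η hη, hshift.eventually (mem_interior_iff_mem_nhds.1 hx)] with h hUh hK
  have hle := hU.le (x + h) (Y x + h) hK
  rw [add_sub_add_right_eq_sub] at hle
  linarith [hU.eq x]

theorem le_add (hU : IsSupConvolution K f k U Y) (hV : IsSupConvolution K g k V Z) {y z : E}
    (hy : y ∈ K) (hz : z ∈ K) (x : E) :
    f y + g z - k / 2 * ‖y - z‖ ^ 2 - 2 * k * ‖x - midpoint ℝ y z‖ ^ 2 ≤ U x + V x := by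
  have hApollonius :=
    EuclideanGeometry.dist_sq_add_dist_sq_eq_two_mul_dist_midpoint_sq_add_half_dist_sq x y z
  simp only [dist_eq_norm] at hApollonius
  linear_combination hU.le x y hy + hV.le x z hz + k * hApollonius

theorem add_eq (hU : IsSupConvolution K f k U Y) (hV : IsSupConvolution K g k V Z) (x : E) :
    U x + V x = f (Y x) + g (Z x) - k / 2 * ‖Y x - Z x‖ ^ 2
      - 2 * k * ‖x - midpoint ℝ (Y x) (Z x)‖ ^ 2 := by
  have hApollonius :=
    EuclideanGeometry.dist_sq_add_dist_sq_eq_two_mul_dist_midpoint_sq_add_half_dist_sq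
      x (Y x) (Z x)
  simp only [dist_eq_norm] at hApollonius
  linear_combination hU.eq x + hV.eq x - k * hApollonius

theorem exists_forall_add_le_add_inner (hK : IsCompact K) (hf : UpperSemicontinuousOn f K)
    (hg : UpperSemicontinuousOn g K) (hk : 0 < k) (hU : IsSupConvolution K f k U Y)
    (hV : IsSupConvolution K g k V Z) (p : E) :
    ∃ x, ∀ w, U w + V w ≤ U x + V x + ⟪p, w - x⟫ := by
  have hne : K.Nonempty := ⟨Y 0, hU.mem 0⟩
  have hfg : UpperSemicontinuousOn (fun w : E × E => f w.1 + g w.2) (K ×ˢ K) :=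
    (hf.comp continuousOn_fst fun w hw => hw.1).add (hg.comp continuousOn_snd fun w hw => hw.2)
  have hpen : ContinuousOn
      (fun w : E × E => -(k / 2 * ‖w.1 - w.2‖ ^ 2 + ⟪p, midpoint ℝ w.1 w.2⟫)) (K ×ˢ K) := by
    simp only [midpoint_eq_smul_add]
    fun_prop
  obtain ⟨⟨y, z⟩, ⟨hy, hz⟩, hmax⟩ := (hfg.add hpen.upperSemicontinuousOn).exists_isMaxOn
    (hne.prod hne) (hK.prod hK)
  -- For fixed `y` and `z`, the point `midpoint ℝ y z - q` is where the paraboloid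
  -- `x ↦ -2 k ‖x - midpoint ℝ y z‖ ^ 2 - ⟪p, x⟫` from `le_add` is maximal.
  set q : E := (4 * k)⁻¹ • p
  have hp : p = (4 * k) • q := (smul_inv_smul₀ (by positivity) p).symm
  refine ⟨midpoint ℝ y z - q, fun w => ?_⟩
  set m := midpoint ℝ (Y w) (Z w)
  have hmaxw : f (Y w) + g (Z w) - k / 2 * ‖Y w - Z w‖ ^ 2 - ⟪p, m⟫ ≤
      f y + g z - k / 2 * ‖y - z‖ ^ 2 - ⟪p, midpoint ℝ y z⟫ := by
    have := hmax (show (Y w, Z w) ∈ K ×ˢ K from ⟨hU.mem w, hV.mem w⟩)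
    simp only [mem_ofPred_eq] at this
    linarith
  have hlow := hU.le_add hV hy hz (midpoint ℝ y z - q)
  rw [sub_sub_cancel_left, norm_neg] at hlow
  have hsq : 0 ≤ 2 * k * ‖w - m + q‖ ^ 2 := by positivity
  have hpq : ⟪p, q⟫ = 4 * k * ‖q‖ ^ 2 := by
    rw [hp, real_inner_smul_left, real_inner_self_eq_norm_sq]
  have hpm : ⟪p, w - m⟫ = 4 * k * ⟪w - m, q⟫ := by
    rw [hp, real_inner_smul_left, real_inner_comm]
  rw [norm_add_sq_real] at hsq
  rw [hU.add_eq hV w]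
  simp only [inner_sub_right] at hpm ⊢
  linarith

theorem add_le_add_inner_of_mem_upperContactSet (hU : IsSupConvolution K f k U Y)
    (hV : IsSupConvolution K g k V Z) {x : E}
    (hx : x ∈ upperContactSet (fun w => U w + V w)
      fun w => (2 * k) • (Y w - w) + (2 * k) • (Z w - w)) {w : E} (hw : w ∈ K) :
    f w + g w ≤ f (Y x) + g (Z x) - k / 2 * ‖Y x - Z x‖ ^ 2 +
      ⟪(2 * k) • (Y x - x) + (2 * k) • (Z x - x), w - midpoint ℝ (Y x) (Z x)⟫ := by
  set m := midpoint ℝ (Y x) (Z x)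
  have hlow := hU.le_add hV hw hw (w - (m - x))
  have hupp : U (w - (m - x)) + V (w - (m - x)) ≤ _ := hx (w - (m - x))
  have hpoint : w - (m - x) - x = w - m := by abel
  have heq : U x + V x = _ - 2 * k * ‖x - m‖ ^ 2 := hU.add_eq hV x
  rw [hpoint] at hupp
  rw [midpoint_self, sub_sub_cancel_left, norm_neg, sub_self, norm_zero] at hlow
  rw [norm_sub_rev x] at heq
  linarith

end IsSupConvolution

end SupConvolution

section TheoremOnSums

variable {E : Type*} [NormedAddCommGroup E] [InnerProductSpace ℝ E] [FiniteDimensional ℝ E]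
  {K : Set E} {f g : E → ℝ}

theorem IsSupConvolution.exists_isUpperHessianAt {k r : ℝ} {U V : E → ℝ} {Y Z : E → E}
    (hK : IsCompact K) (hf : UpperSemicontinuousOn f K) (hg : UpperSemicontinuousOn g K)
    (hk : 0 < k) (hU : IsSupConvolution K f k U Y) (hV : IsSupConvolution K g k V Z) (hr : 0 < r) :
    ∃ y ∈ K, ∃ z ∈ K,
      (∃ p : E, ‖p‖ < r ∧ ∀ w ∈ K,
        f w + g w ≤ f y + g z - k / 2 * ‖y - z‖ ^ 2 + ⟪p, w - midpoint ℝ y z⟫) ∧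
      (y ∈ interior K → z ∈ interior K → ∃ T R, IsUpperHessianAt f y T ∧ IsUpperHessianAt g z R ∧
        ∀ h, ⟪T h, h⟫ + ⟪R h, h⟫ ≤ 0) := by
  obtain ⟨x, hx, hslope, hP, hQ⟩ :=
    hU.isSemiconvexGradient.exists_mem_upperContactSet_differentiableAt
      hV.isSemiconvexGradient hk.le (hU.exists_forall_add_le_add_inner hK hf hg hk hV) hr
  refine ⟨Y x, hU.mem x, Z x, hV.mem x, ⟨_, hslope, fun w hw =>
    hU.add_le_add_inner_of_mem_upperContactSet hV hx hw⟩, fun hy hz => ?_⟩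
  have hUx := hU.isSemiconvexGradient.hasTaylorExpansionAt hP.hasFDerivAt
  have hVx := hV.isSemiconvexGradient.hasTaylorExpansionAt hQ.hasFDerivAt
  refine ⟨_, _, hU.isUpperHessianAt hy hUx.isUpperHessianAt,
    hV.isUpperHessianAt hz hVx.isUpperHessianAt, fun h => ?_⟩
  rw [← inner_add_left]
  exact (hUx.add hVx).inner_nonpos_of_le_affine hx h

theorem exists_isUpperHessianAt_add_nonpos (hK : IsCompact K) (hf : UpperSemicontinuousOn f K)
    (hg : UpperSemicontinuousOn g K) {c : ℝ} (hfr : ∀ x ∈ frontier K, f x + g x < c) {x : E}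
    (hx : x ∈ K) (hcx : c < f x + g x) :
    ∃ y ∈ interior K, ∃ z ∈ interior K, c ≤ f y + g z ∧
      ∃ T R, IsUpperHessianAt f y T ∧ IsUpperHessianAt g z R ∧
        ∀ h, ⟪T h, h⟫ + ⟪R h, h⟫ ≤ 0 := by
  obtain ⟨k, hk, hinterior⟩ := exists_forall_mem_interior_of_le_sub_mul_dist_sq hK hf hg hfr
  obtain ⟨D, hD⟩ := hK.isBounded.subset_closedBall x
  have hD0 : 0 ≤ D := nonempty_closedBall.1 ⟨x, hD hx⟩
  have hgap : 0 < f x + g x - c := sub_pos.2 hcx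
  obtain ⟨U, Y, hU⟩ := exists_isSupConvolution hK ⟨x, hx⟩ hf (2 * k)
  obtain ⟨V, Z, hV⟩ := exists_isSupConvolution hK ⟨x, hx⟩ hg (2 * k)
  obtain ⟨y, hy, z, hz, ⟨p, hp, hpw⟩, hHess⟩ := hU.exists_isUpperHessianAt hK hf hg
    (by positivity) hV (r := (f x + g x - c) / (D + 1)) (by positivity)
  have hmid : ‖x - midpoint ℝ y z‖ ≤ D :=
    mem_closedBall_iff_norm'.1 ((convex_closedBall x D).midpoint_mem (hD hy) (hD hz))
  have hinner : ⟪p, x - midpoint ℝ y z⟫ ≤ f x + g x - c := calc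
    ⟪p, x - midpoint ℝ y z⟫ ≤ ‖p‖ * ‖x - midpoint ℝ y z‖ := real_inner_le_norm _ _
    _ ≤ (f x + g x - c) / (D + 1) * (D + 1) := by gcongr; linarith
    _ = f x + g x - c := by field_simp
  have hval : c ≤ f y + g z - k * dist y z ^ 2 := by
    have := hpw x hx
    rw [mul_div_cancel_left₀ k two_ne_zero, ← dist_eq_norm] at this
    linarith
  obtain ⟨hyi, hzi⟩ := hinterior y hy z hz hval
  have hpen : 0 ≤ k * dist y z ^ 2 := by positivity
  exact ⟨y, hyi, z, hzi, by linarith, hHess hyi hzi⟩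

theorem exists_isUpperHessianAt_add_le_neg_sq (hK : IsCompact K)
    (hf : UpperSemicontinuousOn f K) (hg : UpperSemicontinuousOn g K) (a : E →ᵃ[ℝ] ℝ)
    (hfr : ∀ x ∈ frontier K, f x + g x ≤ a x) {x : E} (hx : x ∈ K) (hax : a x < f x + g x) :
    ∃ y ∈ interior K, ∃ z ∈ interior K, ∃ ε > 0, a y < f y + g z ∧
      ∃ T R, IsUpperHessianAt f y T ∧ IsUpperHessianAt g z R ∧
        ∀ h, ⟪T h, h⟫ + ⟪R h, h⟫ ≤ -(ε * ‖h‖ ^ 2) := by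
  obtain ⟨D, hD⟩ := hK.isBounded.subset_closedBall 0
  have hD : ∀ w ∈ K, ‖w‖ ^ 2 ≤ D ^ 2 := fun w hw =>
    pow_le_pow_left₀ (norm_nonneg w) (mem_closedBall_zero_iff.1 (hD hw)) 2
  set γ := f x + g x - a x
  have hγ0 : 0 < γ := sub_pos.2 hax
  set δ := γ / (4 * (D ^ 2 + 1)) with hδ
  have hδ0 : 0 < δ := by positivity
  have hδD : δ * D ^ 2 ≤ γ / 4 := calc
    δ * D ^ 2 ≤ δ * (D ^ 2 + 1) := by gcongr; linarith
    _ = γ / 4 := by rw [hδ]; field_simp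
  have hsmall : ∀ w ∈ K, δ * ‖w‖ ^ 2 ≤ γ / 4 := fun w hw =>
    (mul_le_mul_of_nonneg_left (hD w hw) hδ0.le).trans hδD
  let l : E →L[ℝ] ℝ := LinearMap.toContinuousLinearMap a.linear
  have ha : ∀ w, a w = l w + a 0 := fun w => congrFun a.decomp w
  have hF : UpperSemicontinuousOn (fun w => f w + (δ * ‖w‖ ^ 2 - (l w + a 0))) K :=
    hf.add (ContinuousOn.upperSemicontinuousOn (by fun_prop))
  have hxF : γ / 2 < f x + (δ * ‖x‖ ^ 2 - (l x + a 0)) + g x := by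
    linarith [ha x, mul_nonneg hδ0.le (sq_nonneg ‖x‖)]
  obtain ⟨y, hy, z, hz, hyz, T, R, hT, hR, hTR⟩ := exists_isUpperHessianAt_add_nonpos hK hF hg
    (fun w hw => by linarith [ha w, hfr w hw, hsmall w (hK.isClosed.frontier_subset hw)]) hx hxF
  refine ⟨y, hy, z, hz, 2 * δ, by positivity, ?_, _, R, hT.of_add_normSq_sub_affine, hR,
    fun h => ?_⟩
  · linarith [ha y, hsmall y (interior_subset hy)]
  · simp only [sub_apply, smul_apply, ContinuousLinearMap.id_apply, inner_sub_left,
      real_inner_smul_left, real_inner_self_eq_norm_sq]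
    linarith [hTR h]

end TheoremOnSums

section Truncation

theorem coe_toReal_max {a : EReal} (ha : a ≠ ⊤) (L : ℝ) :
    ((max a L).toReal : EReal) = max a L :=
  EReal.coe_toReal (max_lt ha.lt_top (EReal.coe_lt_top L)).ne
    ((EReal.bot_lt_coe L).trans_le (le_max_right _ _)).ne'

theorem le_coe_toReal_max {a : EReal} (ha : a ≠ ⊤) (L : ℝ) : a ≤ ((max a L).toReal : EReal) :=
  (le_max_left _ _).trans_eq (coe_toReal_max ha L).symm

theorem eq_coe_toReal_max_of_lt {a : EReal} (ha : a ≠ ⊤) {L : ℝ} (hL : L < (max a L).toReal) :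
    a = (max a L).toReal := by
  rw [← EReal.coe_lt_coe_iff, coe_toReal_max ha] at hL
  rw [coe_toReal_max ha]
  exact (max_eq_left ((lt_max_iff.1 hL).resolve_right (lt_irrefl _)).le).symm

variable {α : Type*} [TopologicalSpace α] {K : Set α} {u v : α → EReal}

theorem upperSemicontinuousOn_toReal_max (hu : UpperSemicontinuousOn u K)
    (htop : ∀ x ∈ K, u x ≠ ⊤) (L : ℝ) :
    UpperSemicontinuousOn (fun x => (max (u x) L).toReal) K := by
  intro x hx b hb
  rw [← EReal.coe_lt_coe_iff, coe_toReal_max (htop x hx), max_lt_iff] at hb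
  filter_upwards [hu x hx b hb.1, self_mem_nhdsWithin] with y hy hyK
  rw [← EReal.coe_lt_coe_iff, coe_toReal_max (htop y hyK)]
  exact max_lt hy hb.2

theorem exists_real_forall_le (hK : IsCompact K) (hu : UpperSemicontinuousOn u K)
    (htop : ∀ x ∈ K, u x ≠ ⊤) : ∃ M : ℝ, ∀ x ∈ K, u x ≤ M := by
  obtain rfl | hne := K.eq_empty_or_nonempty
  · exact ⟨0, by simp⟩
  obtain ⟨y, hy, hmax⟩ := hu.exists_isMaxOn hne hK
  exact ⟨(u y).toReal, fun x hx => (hmax hx).trans (EReal.le_coe_toReal (htop y hy))⟩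

theorem exists_real_majorants (hK : IsCompact K) (hu : UpperSemicontinuousOn u K)
    (hv : UpperSemicontinuousOn v K) (hu_top : ∀ x ∈ K, u x ≠ ⊤) (hv_top : ∀ x ∈ K, v x ≠ ⊤)
    (m : ℝ) :
    ∃ f g : α → ℝ, UpperSemicontinuousOn f K ∧ UpperSemicontinuousOn g K ∧
      (∀ x ∈ K, u x ≤ f x) ∧ (∀ x ∈ K, v x ≤ g x) ∧
      ∀ x ∈ K, ∀ y ∈ K, m < f x + g y → u x = f x ∧ v y = g y := by
  obtain ⟨M₁, hM₁⟩ := exists_real_forall_le hK hu hu_top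
  obtain ⟨M₂, hM₂⟩ := exists_real_forall_le hK hv hv_top
  set M := max M₁ M₂
  set L := min M (m - M)
  have hle : ∀ {a : EReal} {N : ℝ}, a ≤ N → a ≠ ⊤ → N ≤ M → (max a L).toReal ≤ M := by
    intro a N haN ha hNM
    rw [← EReal.coe_le_coe_iff, coe_toReal_max ha]
    exact max_le (haN.trans (EReal.coe_le_coe_iff.2 hNM))
      (EReal.coe_le_coe_iff.2 (min_le_left _ _))
  have hLm : L ≤ m - M := min_le_right _ _
  refine ⟨fun x => (max (u x) L).toReal, fun x => (max (v x) L).toReal,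
    upperSemicontinuousOn_toReal_max hu hu_top L, upperSemicontinuousOn_toReal_max hv hv_top L,
    fun x hx => le_coe_toReal_max (hu_top x hx) L, fun x hx => le_coe_toReal_max (hv_top x hx) L,
    fun x hx y hy hm => ?_⟩
  have hux := hle (hM₁ x hx) (hu_top x hx) (le_max_left _ _)
  have hvy := hle (hM₂ y hy) (hv_top y hy) (le_max_right _ _)
  exact ⟨eq_coe_toReal_max_of_lt (hu_top x hx) (by linarith),
    eq_coe_toReal_max_of_lt (hv_top y hy) (by linarith)⟩

end Truncation

section TouchingMajorants

variable {E : Type*} [NormedAddCommGroup E] [InnerProductSpace ℝ E] [FiniteDimensional ℝ E]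
  {K : Set E} {u v : E → EReal}

theorem exists_majorants_isUpperHessianAt_add_le_neg_sq (hK : IsCompact K)
    (hu : UpperSemicontinuousOn u K) (hv : UpperSemicontinuousOn v K)
    (hu_top : ∀ x ∈ K, u x ≠ ⊤) (hv_top : ∀ x ∈ K, v x ≠ ⊤) (a : E →ᵃ[ℝ] ℝ)
    (hfr : ∀ x ∈ frontier K, u x + v x ≤ (a x : EReal)) {x : E} (hx : x ∈ K)
    (hax : (a x : EReal) < u x + v x) :
    ∃ f g : E → ℝ, (∀ x ∈ K, u x ≤ f x) ∧ (∀ x ∈ K, v x ≤ g x) ∧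
      ∃ y ∈ interior K, ∃ z ∈ interior K, u y = f y ∧ v z = g z ∧
        ∃ ε > 0, ∃ T R : E →L[ℝ] E, IsUpperHessianAt f y T ∧ IsUpperHessianAt g z R ∧
          ∀ h, ⟪T h, h⟫ + ⟪R h, h⟫ ≤ -(ε * ‖h‖ ^ 2) := by
  obtain ⟨m, hm⟩ := hK.bddBelow_image a.continuous_of_finiteDimensional.continuousOn
  obtain ⟨f, g, hf, hg, huf, hvg, hfg⟩ := exists_real_majorants hK hu hv hu_top hv_top m
  have hfrontier : ∀ w ∈ frontier K, f w + g w ≤ a w := by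
    intro w hw
    by_contra! hlt
    have hwK := hK.isClosed.frontier_subset hw
    obtain ⟨huw, hvw⟩ := hfg w hwK w hwK ((hm ⟨w, hwK, rfl⟩).trans_lt hlt)
    have hle := hfr w hw
    rw [huw, hvw, ← EReal.coe_add, EReal.coe_le_coe_iff] at hle
    exact hlt.not_ge hle
  have hfgx : a x < f x + g x := by
    rw [← EReal.coe_lt_coe_iff, EReal.coe_add]
    exact hax.trans_le (add_le_add (huf x hx) (hvg x hx))
  obtain ⟨y, hy, z, hz, ε, hε, hyz, T, R, hTR⟩ :=
    exists_isUpperHessianAt_add_le_neg_sq hK hf hg a hfrontier hx hfgx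
  obtain ⟨huy, hvz⟩ := hfg y (interior_subset hy) z (interior_subset hz)
    ((hm ⟨y, interior_subset hy, rfl⟩).trans_lt hyz)
  exact ⟨f, g, huf, hvg, y, hy, z, hz, huy, hvz, ε, hε, T, R, hTR⟩

end TouchingMajorants

section Quadratic

variable {E : Type*} [NormedAddCommGroup E] [InnerProductSpace ℝ E]

theorem hasFDerivAt_add_half_inner {T : E →L[ℝ] E} (hT : (T : E →ₗ[ℝ] E).IsSymmetric)
    (l : E →L[ℝ] ℝ) (y x : E) :
    HasFDerivAt (fun x => l (x - y) + 1 / 2 * ⟪T (x - y), x - y⟫)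
      (l + innerSL ℝ (T (x - y))) x := by
  have hsub : HasFDerivAt (fun x => x - y) (ContinuousLinearMap.id ℝ E) x :=
    (hasFDerivAt_id x).sub_const y
  refine ((l.hasFDerivAt.comp x hsub).add
    (((T.hasFDerivAt.comp x hsub).inner ℝ hsub).const_mul (1 / 2))).congr_fderiv ?_
  ext v
  have hsymm : ⟪T v, x - y⟫ = ⟪T (x - y), v⟫ := by
    rw [real_inner_comm]
    exact (hT (x - y) v).symm
  change l v + 1 / 2 * (⟪T (x - y), v⟫ + ⟪T v, x - y⟫) = l v + ⟪T (x - y), v⟫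
  rw [hsymm]
  ring

end Quadratic

namespace SymMat

variable {n : ℕ}

/-- The operator on Euclidean space with matrix `A`, as a linear function of `A`. Second-order
conditions are phrased through its quadratic form `v ↦ ⟪toCLM A v, v⟫`. -/
def toCLM : SymMat n →ₗ[ℝ] Euc n →L[ℝ] Euc n where
  toFun A := Matrix.toEuclideanCLM (𝕜 := ℝ) A
  map_add' _ _ := map_add (Matrix.toEuclideanCLM (𝕜 := ℝ)) _ _
  map_smul' c A := map_smul (Matrix.toEuclideanCLM (𝕜 := ℝ)) c (A : Matrix (Fin n) (Fin n) ℝ)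

theorem toCLM_isSymmetric (A : SymMat n) : (toCLM A : Euc n →ₗ[ℝ] Euc n).IsSymmetric :=
  (IsSelfAdjoint.map A.2 (Matrix.toEuclideanCLM (𝕜 := ℝ))).isSymmetric

theorem toCLM_symOne : toCLM (symOne n) = ContinuousLinearMap.id ℝ (Euc n) :=
  map_one (Matrix.toEuclideanCLM (𝕜 := ℝ))

theorem inner_toCLM_single (A : SymMat n) (i j : Fin n) :
    ⟪toCLM A (EuclideanSpace.single i 1), EuclideanSpace.single j 1⟫ =
      (A : Matrix (Fin n) (Fin n) ℝ) i j := by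
  rw [← (show Matrix.transpose (A : Matrix (Fin n) (Fin n) ℝ) = A from A.2)]
  simp [toCLM, EuclideanSpace.inner_single_right, Matrix.ofLp_toEuclideanCLM]

theorem posSemidef_of_forall_inner_nonneg {A : SymMat n} (h : ∀ v, 0 ≤ ⟪toCLM A v, v⟫) :
    (A : Matrix (Fin n) (Fin n) ℝ).PosSemidef := by
  refine Matrix.isPositive_toEuclideanLin_iff.1 ⟨toCLM_isSymmetric A, fun v => ?_⟩
  exact h v

theorem exists_inner_toCLM_self_eq (T : Euc n →L[ℝ] Euc n) :
    ∃ A : SymMat n, ∀ v, ⟪toCLM A v, v⟫ = ⟪T v, v⟫ := by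
  let e := Matrix.toEuclideanCLM (n := Fin n) (𝕜 := ℝ)
  refine ⟨selfAdjointPart ℝ (e.symm T), fun v => ?_⟩
  have hpart : toCLM (selfAdjointPart ℝ (e.symm T)) = (⅟2 : ℝ) • (T + star T) := by
    change e ((⅟2 : ℝ) • (e.symm T + star (e.symm T))) = _
    rw [map_smul, map_add, map_star, e.apply_symm_apply]
  have hstar : ⟪star T v, v⟫ = ⟪T v, v⟫ := by
    rw [ContinuousLinearMap.star_eq_adjoint, ContinuousLinearMap.adjoint_inner_left,
      real_inner_comm]
  rw [hpart, smul_apply, add_apply, real_inner_smul_left, inner_add_left, hstar, invOf_eq_inv]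
  ring

theorem continuous_toCLM : Continuous (toCLM : SymMat n → Euc n →L[ℝ] Euc n) :=
  let e := Matrix.toEuclideanCLM (n := Fin n) (𝕜 := ℝ)
  e.toAlgEquiv.toLinearMap.continuous_of_finiteDimensional.comp continuous_subtype_val

theorem continuous_add_smul_symOne (A : SymMat n) : Continuous fun t : ℝ => A + t • symOne n := by
  refine continuous_induced_rng.2 ?_
  change Continuous fun t : ℝ => (A : Matrix (Fin n) (Fin n) ℝ) + t • (symOne n).1
  fun_prop

theorem hessMat_add_half_inner (A : SymMat n) (l : Euc n →L[ℝ] ℝ) (y x : Euc n) :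
    hessMat (fun x => l (x - y) + 1 / 2 * ⟪toCLM A (x - y), x - y⟫) x = A := by
  have hfderiv : fderiv ℝ (fun x => l (x - y) + 1 / 2 * ⟪toCLM A (x - y), x - y⟫) =
      fun x => l + innerSL ℝ (toCLM A (x - y)) :=
    funext fun x => (hasFDerivAt_add_half_inner (toCLM_isSymmetric A) l y x).fderiv
  have hfderiv₂ : HasFDerivAt (fun x => l + innerSL ℝ (toCLM A (x - y)))
      ((innerSL ℝ).comp (toCLM A)) x :=
    (((innerSL ℝ).comp (toCLM A)).hasFDerivAt.comp x ((hasFDerivAt_id x).sub_const y)).const_add l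
  funext i j
  rw [hessMat, iteratedFDeriv_two_apply, hfderiv, hfderiv₂.fderiv]
  exact inner_toCLM_single A i j

theorem isTypeFC2_add_half_inner {F : Set (SymMat n)} {A : SymMat n} (hA : A ∈ F)
    (X : Set (Euc n)) (l : Euc n →L[ℝ] ℝ) (y : Euc n) :
    IsTypeFC2 F X fun x => l (x - y) + 1 / 2 * ⟪toCLM A (x - y), x - y⟫ := by
  have hsub : ContDiff ℝ 2 fun x : Euc n => x - y := contDiff_id.sub contDiff_const
  exact ⟨((l.contDiff.comp hsub).add (contDiff_const.mul
    (((toCLM A).contDiff.comp hsub).inner ℝ hsub))).contDiffOn,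
    fun x _ => ⟨A, hA, (hessMat_add_half_inner A l y x).symm⟩⟩

end SymMat

section Viscosity

variable {n : ℕ} {F : Set (SymMat n)} {X : Set (Euc n)} {u : Euc n → EReal} {f : Euc n → ℝ}
  {y : Euc n} {A : SymMat n}

theorem IsTypeF.add_smul_symOne_mem (hu : IsTypeF F X u)
    (hX : X ∈ 𝓝 y)
    (hle : ∀ᶠ x in 𝓝 y, u x ≤ f x) (huy : u y = f y)
    (hA : IsUpperHessianAt f y (SymMat.toCLM A)) {ε : ℝ} (hε : 0 < ε) : A + ε • symOne n ∈ F := by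
  by_contra hmem
  obtain ⟨l, hl⟩ := hA
  set B := A + ε • symOne n
  have hB : -B ∈ dirDual F := by
    intro h
    rw [neg_neg] at h
    exact hmem (interior_subset h)
  have hquad : ∀ w, ⟪SymMat.toCLM (-B) w, w⟫ = -(⟪SymMat.toCLM A w, w⟫ + ε * ‖w‖ ^ 2) := by
    intro w
    rw [map_neg, map_add, map_smul, SymMat.toCLM_symOne, neg_apply, add_apply, smul_apply,
      ContinuousLinearMap.id_apply, inner_neg_left, inner_add_left, real_inner_smul_left,
      real_inner_self_eq_norm_sq]
  have htest : ∀ᶠ x in 𝓝 y, f x ≤ f y + l (x - y) + 1 / 2 * ⟪SymMat.toCLM A (x - y), x - y⟫ +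
      ε / 4 * ‖x - y‖ ^ 2 := by
    have hsub : Tendsto (fun x => x - y) (𝓝 y) (𝓝 0) :=
      Continuous.tendsto' (by fun_prop) _ _ (sub_self y)
    filter_upwards [hsub.eventually (hl (ε / 4) (by positivity))] with x hx
    rwa [add_sub_cancel] at hx
  obtain ⟨r, hr, hball⟩ := nhds_basis_closedBall.eventually_iff.1
    (Filter.Eventually.and hX (hle.and htest))
  have hcenter := hu _ (SymMat.isTypeFC2_add_half_inner hB X (-l) y) (closedBall y r)
    (isCompact_closedBall y r) (fun x hx => (hball hx).1)
    (AffineMap.const ℝ (Euc n) (f y - ε / 4 * r ^ 2)) (fun x hx => ?_) y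
    (mem_closedBall_self hr.le)
  · simp only [huy, sub_self, map_zero, inner_zero_left, mul_zero, add_zero, EReal.coe_zero,
      AffineMap.const_apply, EReal.coe_le_coe_iff] at hcenter
    linarith [mul_pos hε (pow_pos hr 2)]
  · obtain ⟨-, hux, hfx⟩ := hball (isClosed_closedBall.frontier_subset hx)
    have hxr : ‖x - y‖ = r := mem_sphere_iff_norm.1 (frontier_closedBall_subset_sphere hx)
    refine (add_le_add hux le_rfl).trans ?_
    rw [AffineMap.const_apply, ← EReal.coe_add, EReal.coe_le_coe_iff, hquad, neg_apply, hxr]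
    rw [hxr] at hfx
    linarith

theorem IsTypeF.mem_of_isUpperHessianAt (hF : IsClosed F) (hu : IsTypeF F X u)
    (hX : X ∈ 𝓝 y)
    (hle : ∀ᶠ x in 𝓝 y, u x ≤ f x) (huy : u y = f y)
    (hA : IsUpperHessianAt f y (SymMat.toCLM A)) : A ∈ F := by
  have htend : Tendsto (fun t : ℝ => A + t • symOne n) (𝓝[>] 0) (𝓝 A) :=
    tendsto_nhdsWithin_of_tendsto_nhds
      ((SymMat.continuous_add_smul_symOne A).tendsto' _ _ (by rw [zero_smul, add_zero]))
  exact hF.mem_of_tendsto htend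
    (eventually_mem_nhdsWithin.mono fun _ hε => hu.add_smul_symOne_mem hX hle huy hA hε)

end Viscosity

section Duality

variable {n : ℕ} {F : Set (SymMat n)}

theorem isClosed_dirDual (F : Set (SymMat n)) : IsClosed (dirDual F) :=
  isOpen_interior.isClosed_compl.preimage continuous_neg

theorem IsDirichletSet.mem_interior (hF : IsDirichletSet F) {A C : SymMat n} (hA : A ∈ F) {ε : ℝ}
    (hε : 0 < ε) (h : ∀ w, ⟪SymMat.toCLM A w, w⟫ + ε * ‖w‖ ^ 2 ≤ ⟪SymMat.toCLM C w, w⟫) :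
    C ∈ interior F := by
  rw [mem_interior_iff_mem_nhds]
  filter_upwards [SymMat.continuous_toCLM.continuousAt.eventually
    (ball_mem_nhds (SymMat.toCLM C) hε)] with B hB
  rw [← add_sub_cancel A B]
  refine hF.add_psd A hA _ (SymMat.posSemidef_of_forall_inner_nonneg fun w => ?_)
  have herr : -(ε * ‖w‖ ^ 2) ≤ ⟪(SymMat.toCLM B - SymMat.toCLM C) w, w⟫ := by
    refine neg_le_of_abs_le ((abs_real_inner_le_norm _ _).trans ?_)
    calc ‖(SymMat.toCLM B - SymMat.toCLM C) w‖ * ‖w‖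
        ≤ ε * ‖w‖ * ‖w‖ := by
          gcongr
          exact ContinuousLinearMap.le_of_opNorm_le _ (mem_ball_iff_norm.1 hB).le w
      _ = ε * ‖w‖ ^ 2 := by ring
  rw [sub_apply, inner_sub_left] at herr
  rw [map_sub, sub_apply, inner_sub_left]
  linarith [h w]

theorem IsDirichletSet.not_inner_add_inner_le_neg (hF : IsDirichletSet F) {A B : SymMat n}
    (hA : A ∈ F) (hB : B ∈ dirDual F) {ε : ℝ} (hε : 0 < ε) :
    ¬ ∀ w, ⟪SymMat.toCLM A w, w⟫ + ⟪SymMat.toCLM B w, w⟫ ≤ -(ε * ‖w‖ ^ 2) := by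
  refine fun h => hB (hF.mem_interior hA hε fun w => ?_)
  rw [map_neg, neg_apply, inner_neg_left]
  linarith [h w]

end Duality

theorem subaffine_theorem_general {n : ℕ} (F : Set (SymMat n)) (hF : IsDirichletSet F)
    (X : Set (Euc n))
    (u : Euc n → EReal) (hu_usc : UpperSemicontinuousOn u X) (hu_fin : ∀ x ∈ X, u x ≠ ⊤)
    (hu : IsTypeF F (interior X) u)
    (v : Euc n → EReal) (hv_usc : UpperSemicontinuousOn v X) (hv_fin : ∀ x ∈ X, v x ≠ ⊤)
    (hv : IsTypeF (dirDual F) (interior X) v) :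
    SubaffineOn X (fun x => u x + v x) := by
  intro K hK hKX a hfr x hx
  by_contra! hlt
  obtain ⟨f, g, huf, hvg, y, hy, z, hz, huy, hvz, ε, hε, T, R, hT, hR, hTR⟩ :=
    exists_majorants_isUpperHessianAt_add_le_neg_sq hK (hu_usc.mono hKX) (hv_usc.mono hKX)
      (fun x hx => hu_fin x (hKX hx)) (fun x hx => hv_fin x (hKX hx)) a hfr hx hlt
  obtain ⟨A, hA⟩ := SymMat.exists_inner_toCLM_self_eq T
  obtain ⟨B, hB⟩ := SymMat.exists_inner_toCLM_self_eq R
  have hX {p : Euc n} (hp : p ∈ interior K) : interior X ∈ 𝓝 p :=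
    isOpen_interior.mem_nhds (interior_mono hKX hp)
  have hAF : A ∈ F := hu.mem_of_isUpperHessianAt hF.isClosed (hX hy)
    (mem_of_superset (mem_interior_iff_mem_nhds.1 hy) huf) huy (hT.congr hA)
  have hBF : B ∈ dirDual F := hv.mem_of_isUpperHessianAt (isClosed_dirDual F) (hX hz)
    (mem_of_superset (mem_interior_iff_mem_nhds.1 hz) hvg) hvz (hR.congr hB)
  exact hF.not_inner_add_inner_le_neg hAF hBF hε fun w => by rw [hA, hB]; exact hTR w

/-- Theorem 6.5, the Subaffine Theorem: if `u` is of type `F` and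
`v` is of type `F̃` on an open set `X`, then `u + v` is subaffine on `X`. -/
theorem subaffine_theorem {n : ℕ} (F : Set (SymMat n)) (hF : IsDirichletSet F)
    (X : Set (Euc n)) (hX : IsOpen X)
    (u : Euc n → EReal) (hu_usc : UpperSemicontinuousOn u X) (hu_fin : ∀ x ∈ X, u x ≠ ⊤)
    (hu : IsTypeF F X u)
    (v : Euc n → EReal) (hv_usc : UpperSemicontinuousOn v X) (hv_fin : ∀ x ∈ X, v x ≠ ⊤)
    (hv : IsTypeF (dirDual F) X v) :
    SubaffineOn X (fun x => u x + v x) := by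
  exact subaffine_theorem_general F hF X u hu_usc hu_fin (hX.interior_eq.symm ▸ hu) v hv_usc hv_fin
    (hX.interior_eq.symm ▸ hv)
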